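/- Let n ≥ 1 and let p ∈ ℝⁿ satisfy a Diophantine condition. Let f : ℝⁿ → ℝ be smooth and ℤⁿ-periodic with ∫_{[0,1]ⁿ} f(x) dx = 0. Then there exists a smooth ℤⁿ-periodic function φ : ℝⁿ → ℝ such that p·∇φ(x) = f(x) for all x ∈ ℝⁿ. -/

import Mathlib

open scoped RealInnerProductSpace
open MeasureTheory

namespace DioAux

noncomputable local instance msCircle : MeasureSpace UnitAddCircle := ⟨AddCircle.haarAddCircle⟩

local instance msHaar : Measure.IsAddHaarMeasure (volume : Measure UnitAddCircle) :=
  inferInstanceAs (Measure.IsAddHaarMeasure AddCircle.haarAddCircle)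

local instance msProb : IsProbabilityMeasure (volume : Measure UnitAddCircle) :=
  inferInstanceAs (IsProbabilityMeasure AddCircle.haarAddCircle)

abbrev E (n : ℕ) := EuclideanSpace ℝ (Fin n)

/-- Covering map to the torus. -/
def tmk {n : ℕ} (x : E n) : UnitAddTorus (Fin n) := fun i => (x i : UnitAddCircle)

/-- Periodicity. -/
def Per {n : ℕ} (g : E n → ℂ) : Prop := ∀ (x : E n) (k : Fin n → ℤ),
  g (x + WithLp.toLp 2 (fun i => (k i : ℝ))) = g x

/-- Descent to the torus. -/
noncomputable def lift {n : ℕ} (g : E n → ℂ) (y : UnitAddTorus (Fin n)) : ℂ :=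
  g (WithLp.toLp 2 (fun i => (AddCircle.equivIoc 1 0 (y i)).1))

lemma tmk_rep {n : ℕ} (y : UnitAddTorus (Fin n)) :
    tmk (WithLp.toLp 2 (fun i => (AddCircle.equivIoc 1 0 (y i)).1)) = y := by
  funext i
  exact (AddCircle.equivIoc 1 0).symm_apply_apply (y i)

lemma lift_tmk {n : ℕ} {g : E n → ℂ} (hg : Per g) (x : E n) : lift g (tmk x) = g x := by
  have h := tmk_rep (tmk x)
  have h2 : ∀ i, ∃ m : ℤ, (AddCircle.equivIoc 1 0 (tmk x i)).1 = x i + m := by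
    intro i
    have := congrFun h i
    simp only [tmk] at this
    rw [← sub_eq_zero, ← AddCircle.coe_sub, AddCircle.coe_eq_zero_iff] at this
    obtain ⟨m, hm⟩ := this
    refine ⟨m, ?_⟩
    simp only [zsmul_eq_mul, mul_one] at hm
    simp only [tmk]
    linarith
  choose m hm using h2
  rw [← hg x m]
  unfold lift
  congr 1
  ext i
  simp [hm]

lemma tmk_surj {n : ℕ} (y : UnitAddTorus (Fin n)) : ∃ x : E n, tmk x = y := ⟨_, tmk_rep y⟩

lemma tmk_add {n : ℕ} (x y : E n) : tmk (x + y) = tmk x + tmk y := by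
  funext i; simp [tmk]

lemma quot_tmk {n : ℕ} : IsOpenQuotientMap (tmk : E n → UnitAddTorus (Fin n)) := by
  have h : IsOpenQuotientMap (Pi.map (fun (_ : Fin n) (r : ℝ) => (r : UnitAddCircle))) :=
    IsOpenQuotientMap.piMap (fun _ => QuotientAddGroup.isOpenQuotientMap_mk)
  exact h.comp (PiLp.homeomorph 2 (fun _ : Fin n => ℝ)).isOpenQuotientMap

lemma continuous_lift {n : ℕ} {g : E n → ℂ} (hg : Per g) (hc : Continuous g) :
    Continuous (lift g) := by
  rw [← quot_tmk.continuous_comp_iff]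
  have : lift g ∘ tmk = g := funext (lift_tmk hg)
  rwa [this]

/-- Dot product as a functional. -/
noncomputable def dot {n : ℕ} (k : Fin n → ℤ) : E n →L[ℝ] ℝ :=
  ∑ i, (k i : ℝ) • (EuclideanSpace.proj i : E n →L[ℝ] ℝ)

lemma dot_apply {n : ℕ} (k : Fin n → ℤ) (x : E n) : dot k x = ∑ i, x i * (k i : ℝ) := by
  simp [dot, mul_comm]

lemma mFourier_tmk {n : ℕ} (k : Fin n → ℤ) (x : E n) :
    UnitAddTorus.mFourier k (tmk x) = Complex.exp (2 * Real.pi * Complex.I * (dot k x : ℝ)) := by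
  simp only [UnitAddTorus.mFourier, ContinuousMap.coe_mk, tmk, fourier_coe_apply, dot_apply]
  rw [← Complex.exp_sum]
  congr 1
  push_cast
  rw [Finset.mul_sum]
  apply Finset.sum_congr rfl
  intro i _
  ring

lemma mFourier_add_arg {n : ℕ} (k : Fin n → ℤ) (x y : UnitAddTorus (Fin n)) :
    UnitAddTorus.mFourier k (x + y) = UnitAddTorus.mFourier k x * UnitAddTorus.mFourier k y := by
  simp only [UnitAddTorus.mFourier, ContinuousMap.coe_mk, ← Finset.prod_mul_distrib]
  apply Finset.prod_congr rfl
  intro i _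
  simp [fourier_apply, AddCircle.toCircle_add]

/-- Coefficient. -/
noncomputable def coef {n : ℕ} (g : E n → ℂ) (k : Fin n → ℤ) : ℂ :=
  UnitAddTorus.mFourierCoeff (lift g) k

lemma coef_bound {n : ℕ} {g : E n → ℂ} (hg : Per g) (hc : Continuous g) :
    ∃ C, ∀ k, ‖coef g k‖ ≤ C := by
  let G : C(UnitAddTorus (Fin n), ℂ) := ⟨lift g, continuous_lift hg hc⟩
  refine ⟨‖G‖, fun k => ?_⟩
  unfold coef UnitAddTorus.mFourierCoeff
  have := norm_integral_le_of_norm_le_const (μ := (volume : Measure (UnitAddTorus (Fin n)))) (C := ‖G‖)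
    (f := fun t => UnitAddTorus.mFourier (-k) t • lift g t) ?_
  · simpa using this
  · refine Filter.Eventually.of_forall fun t => ?_
    rw [norm_smul]
    have h1 := (UnitAddTorus.mFourier (-k)).norm_coe_le_norm t
    rw [UnitAddTorus.mFourier_norm] at h1
    have h2 := G.norm_coe_le_norm t
    calc _ ≤ 1 * ‖G‖ := by gcongr; exact h2
      _ = _ := one_mul _

lemma coef_zero {n : ℕ} {g : E n → ℂ} (hg : Per g) :
    coef g 0 = ∫ x in {x : E n | ∀ i, x i ∈ Set.Icc (0:ℝ) 1}, g x := by
  unfold coef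
  rw [UnitAddTorus.mFourierCoeff_eq_integral _ _ 0]
  have h1 : ∀ x : Fin n → ℝ, lift g (fun i => (x i : UnitAddCircle)) = g (WithLp.toLp 2 x) :=
    fun x => lift_tmk hg (WithLp.toLp 2 x)
  simp only [h1, neg_zero, UnitAddTorus.mFourier_zero, ContinuousMap.one_apply, one_smul,
    Pi.zero_apply, zero_add]
  have e1 : {x : Fin n → ℝ | ∀ i, x i ∈ Set.Ioc (0:ℝ) 1} = Set.univ.pi (fun _ => Set.Ioc (0:ℝ) 1) := by
    ext; simp
  have e2 : {x : Fin n → ℝ | ∀ i, x i ∈ Set.Icc (0:ℝ) 1} = Set.univ.pi (fun _ => Set.Icc (0:ℝ) 1) := by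
    ext; simp only [Set.mem_ofPred_eq, Set.mem_univ_pi]
  have e3 : (volume : Measure (Fin n → ℝ)).restrict {x : Fin n → ℝ | ∀ i, x i ∈ Set.Ioc (0:ℝ) 1}
      = (volume : Measure (Fin n → ℝ)).restrict {x : Fin n → ℝ | ∀ i, x i ∈ Set.Icc (0:ℝ) 1} := by
    rw [e1, e2, volume_pi, Measure.restrict_pi_pi, Measure.restrict_pi_pi]
    simp only [Measure.restrict_congr_set Ioc_ae_eq_Icc]
  rw [e3]
  exact ((PiLp.volume_preserving_toLp (Fin n)).setIntegral_preimage_emb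
    (MeasurableEquiv.toLp 2 (Fin n → ℝ)).measurableEmbedding g
     {x : E n | ∀ i, x i ∈ Set.Icc (0:ℝ) 1})

lemma coef_deriv {n : ℕ} {g g' : E n → ℂ} (hg : Per g) (hc : Continuous g) (hg' : Per g')
    (hc' : Continuous g') (v : E n)
    (hd : ∀ x : E n, ∀ t : ℝ, HasDerivAt (fun t : ℝ => g (x + t • v)) (g' (x + t • v)) t)
    (k : Fin n → ℤ) :
    coef g' k = 2 * Real.pi * Complex.I * (dot k v : ℝ) * coef g k := by
  let G : C(UnitAddTorus (Fin n), ℂ) := ⟨lift g, continuous_lift hg hc⟩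
  let G' : C(UnitAddTorus (Fin n), ℂ) := ⟨lift g', continuous_lift hg' hc'⟩
  let F : ℝ → UnitAddTorus (Fin n) → ℂ := fun t y =>
    UnitAddTorus.mFourier (-k) y * G (y + tmk (t • v))
  let F' : ℝ → UnitAddTorus (Fin n) → ℂ := fun t y =>
    UnitAddTorus.mFourier (-k) y * G' (y + tmk (t • v))
  have cF : ∀ t, Continuous (F t) := fun t => by fun_prop
  have cF' : ∀ t, Continuous (F' t) := fun t => by fun_prop
  have key := hasDerivAt_integral_of_dominated_loc_of_deriv_le
    (μ := (volume : Measure (UnitAddTorus (Fin n)))) (F := F) (F' := F') (x₀ := (0:ℝ))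
    (s := Set.univ) (bound := fun _ => ‖G'‖) Filter.univ_mem
    (Filter.Eventually.of_forall fun t => (cF t).aestronglyMeasurable)
    ((cF 0).integrable_of_hasCompactSupport (HasCompactSupport.of_compactSpace _))
    (cF' 0).aestronglyMeasurable
    (Filter.Eventually.of_forall fun y t _ => by
      have h1 := (UnitAddTorus.mFourier (-k)).norm_coe_le_norm y
      rw [UnitAddTorus.mFourier_norm] at h1
      have h2 := G'.norm_coe_le_norm (y + tmk (t • v))
      calc ‖F' t y‖ = _ := norm_mul _ _
        _ ≤ 1 * ‖G'‖ := by gcongr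
        _ = _ := one_mul _)
    (integrable_const _)
    (Filter.Eventually.of_forall fun y t _ => by
      obtain ⟨x, rfl⟩ := tmk_surj y
      have h1 : ∀ s : ℝ, G (tmk x + tmk (s • v)) = g (x + s • v) := fun s => by
        rw [← tmk_add]; exact lift_tmk hg _
      have h2 : ∀ s : ℝ, G' (tmk x + tmk (s • v)) = g' (x + s • v) := fun s => by
        rw [← tmk_add]; exact lift_tmk hg' _
      simp only [F, F', h1, h2]
      exact (hd x t).const_mul _)
  have e1 : ∀ t, ∫ y, F t y = Complex.exp (2 * Real.pi * Complex.I * (dot k v : ℝ) * (t:ℂ)) * coef g k := by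
    intro t
    rw [← integral_sub_right_eq_self _ (tmk (t • v))]
    unfold coef UnitAddTorus.mFourierCoeff
    rw [← integral_const_mul]
    congr 1
    ext y
    have h3 : UnitAddTorus.mFourier (-k) (y - tmk (t • v)) = UnitAddTorus.mFourier (-k) y *
        UnitAddTorus.mFourier k (tmk (t • v)) := by
      have h4 : -tmk (t • v) = tmk (-(t • v)) := by
        funext i; simp [tmk]
      rw [sub_eq_add_neg, mFourier_add_arg, h4, mFourier_tmk, mFourier_tmk]
      congr 3
      simp [dot_apply, Finset.mul_sum, mul_assoc]
    simp only [F, h3, sub_add_cancel, mFourier_tmk, smul_eq_mul, map_smul]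
    simp only [G, ContinuousMap.coe_mk]
    push_cast
    ring_nf
  have d1 : HasDerivAt (fun t : ℝ => ∫ y, F t y)
      (2 * Real.pi * Complex.I * (dot k v : ℝ) * coef g k) 0 := by
    simp only [e1]
    have h5 : HasDerivAt (fun t : ℝ => Complex.exp (2 * Real.pi * Complex.I * (dot k v : ℝ) * (t:ℂ)))
        (2 * Real.pi * Complex.I * (dot k v : ℝ)) 0 := by
      have h6 := ((Complex.ofRealCLM.hasDerivAt (x := (0:ℝ))).const_mul
        (2 * Real.pi * Complex.I * (dot k v : ℝ))).cexp
      simpa using h6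
    exact h5.mul_const _
  have := key.2.unique d1
  rw [← this]
  unfold coef UnitAddTorus.mFourierCoeff
  congr 1
  ext y
  have h0 : tmk ((0:ℝ) • v) = 0 := by funext i; simp [tmk]
  simp only [F', h0, G', add_zero, smul_eq_mul, ContinuousMap.coe_mk]


lemma per_fderiv {n : ℕ} {g : E n → ℂ} (hg : Per g) (v : E n) :
    Per (fun x => fderiv ℝ g x v) := by
  intro x k
  have h : (fun y => g (y + WithLp.toLp 2 (fun i => (k i : ℝ)))) = g := funext fun y => hg y k
  have h2 := fderiv_comp_add_right (𝕜 := ℝ) (f := g) (x := x) (WithLp.toLp 2 (fun i => (k i : ℝ)))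
  rw [h] at h2
  simp only [h2]

lemma decay1 {n : ℕ} (j : Fin n) (N : ℕ) : ∀ {g : E n → ℂ}, Per g → ContDiff ℝ (⊤ : ℕ∞) g →
    ∃ C, ∀ k : Fin n → ℤ, ‖k j‖ ^ N * ‖coef g k‖ ≤ C := by
  induction N with
  | zero =>
    intro g hg hs
    obtain ⟨C, hC⟩ := coef_bound hg hs.continuous
    exact ⟨C, fun k => by simpa using hC k⟩
  | succ N ih =>
    intro g hg hs
    let v : E n := EuclideanSpace.single j 1
    have hs' : ContDiff ℝ (⊤ : ℕ∞) (fun x => fderiv ℝ g x v) :=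
      (hs.fderiv_right (m := (⊤ : ℕ∞)) (by simp)).clm_apply contDiff_const
    obtain ⟨C, hC⟩ := ih (per_fderiv hg v) hs'
    refine ⟨C, fun k => ?_⟩
    have hdiff : Differentiable ℝ g := hs.differentiable (by simp)
    have h1 := coef_deriv hg hs.continuous (per_fderiv hg v) hs'.continuous v
      (fun x t => by
        have h2 : HasDerivAt (fun t : ℝ => x + t • v) v t := by
          simpa using ((hasDerivAt_id t).smul_const v).const_add x
        exact (hdiff (x + t • v)).hasFDerivAt.comp_hasDerivAt t h2) k
    have h3 : dot k v = (k j : ℝ) := by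
      rw [dot_apply]
      simp [v]
    have h4 := hC k
    rw [h1, h3] at h4
    simp only [norm_mul, Complex.norm_real, Complex.norm_I, Complex.norm_ofNat, mul_one] at h4
    have h5 : ‖(k j : ℝ)‖ = ‖k j‖ := rfl
    rw [h5] at h4
    refine le_trans ?_ h4
    have h6 : (1:ℝ) ≤ 2 * ‖Real.pi‖ := by
      rw [Real.norm_of_nonneg Real.pi_pos.le]; linarith [Real.pi_gt_three]
    calc ‖k j‖ ^ (N+1) * ‖coef g k‖ = 1 * (‖k j‖ ^ (N+1) * ‖coef g k‖) := by ring
      _ ≤ (2 * ‖Real.pi‖) * (‖k j‖ ^ (N+1) * ‖coef g k‖) := by gcongr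
      _ = _ := by ring

lemma decay {n : ℕ} (hn : 1 ≤ n) (N : ℕ) {g : E n → ℂ} (hg : Per g) (hs : ContDiff ℝ (⊤ : ℕ∞) g) :
    ∃ C, ∀ k : Fin n → ℤ, ‖k‖ ^ N * ‖coef g k‖ ≤ C := by
  have : Nonempty (Fin n) := ⟨⟨0, hn⟩⟩
  choose C hC using fun j : Fin n => decay1 j N hg hs
  refine ⟨∑ j, |C j|, fun k => ?_⟩
  obtain ⟨j, hj⟩ := Finite.exists_max (fun j => ‖k j‖)
  have h1 : ‖k‖ ≤ ‖k j‖ := (pi_norm_le_iff_of_nonneg (norm_nonneg _)).2 hj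
  calc ‖k‖ ^ N * ‖coef g k‖ ≤ ‖k j‖ ^ N * ‖coef g k‖ := by gcongr
    _ ≤ C j := hC j k
    _ ≤ |C j| := le_abs_self _
    _ ≤ _ := Finset.single_le_sum (f := fun j => |C j|) (fun _ _ => abs_nonneg _) (Finset.mem_univ j)

lemma summ (n : ℕ) : Summable (fun k : Fin n → ℤ => ‖k‖⁻¹ ^ (n + 1)) := by
  let L := Submodule.span ℤ (Set.range (Pi.basisFun ℝ (Fin n)))
  have h := ZLattice.summable_norm_pow_inv L (n + 1) (by
    rw [ZLattice.rank ℝ L]; simp)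
  let ι : (Fin n → ℤ) → L := fun k => ⟨fun i => (k i : ℝ), by
    rw [(Pi.basisFun ℝ (Fin n)).mem_span_iff_repr_mem ℤ]
    intro i
    exact ⟨k i, by simp⟩⟩
  have hi : Function.Injective ι := by
    intro a b hab
    funext i
    have : (a i : ℝ) = (b i : ℝ) := congrFun (congrArg Subtype.val hab) i
    exact_mod_cast this
  have h2 := h.comp_injective hi
  refine h2.congr fun k => ?_
  have : ‖ι k‖ = ‖k‖ := rfl
  simp only [Function.comp_apply, this]

lemma summ_of_decay {n : ℕ} (a : (Fin n → ℤ) → ℂ) (h0 : a 0 = 0)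
    (h : ∀ N : ℕ, ∃ C, ∀ k : Fin n → ℤ, ‖k‖ ^ N * ‖a k‖ ≤ C) (m : ℕ) :
    Summable (fun k : Fin n → ℤ => ‖k‖ ^ m * ‖a k‖) := by
  obtain ⟨C, hC⟩ := h (m + (n + 1))
  refine Summable.of_nonneg_of_le (fun k => by positivity) (fun k => ?_) ((summ n).mul_left C)
  by_cases hk : k = 0
  · subst hk
    simp [h0]
  · have hp : 0 < ‖k‖ := norm_pos_iff.2 hk
    rw [inv_pow, ← div_eq_mul_inv, le_div_iff₀ (by positivity)]
    refine le_trans (le_of_eq ?_) (hC k)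
    rw [pow_add]; ring

lemma dot_norm {n : ℕ} (k : Fin n → ℤ) : ‖dot k‖ ≤ n * ‖k‖ := by
  refine ContinuousLinearMap.opNorm_le_bound _ (by positivity) fun x => ?_
  rw [dot_apply]
  refine (norm_sum_le _ _).trans ?_
  have : ∀ i ∈ Finset.univ, ‖x i * (k i : ℝ)‖ ≤ ‖k‖ * ‖x‖ := by
    intro i _
    rw [norm_mul, mul_comm]
    have h1 := norm_le_pi_norm k i
    have h2 := PiLp.norm_apply_le x i
    have h5 : ‖(k i : ℝ)‖ = ‖k i‖ := rfl
    rw [h5]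
    gcongr
  refine (Finset.sum_le_sum this).trans ?_
  simp [mul_assoc]

/-- exponential monomial -/
noncomputable def ex {n : ℕ} (k : Fin n → ℤ) (x : E n) : ℂ :=
  Complex.exp (2 * Real.pi * Complex.I * (dot k x : ℝ))

lemma iter_exp (m : ℕ) (c : ℂ) : (iteratedDeriv m fun s : ℝ => Complex.exp (c * s)) =
    fun s : ℝ => c ^ m * Complex.exp (c * s) := by
  induction m with
  | zero => simp
  | succ m ih =>
    rw [iteratedDeriv_succ, ih]
    funext s
    have h6 := (((Complex.ofRealCLM.hasDerivAt (x := s)).const_mul c).cexp).const_mul (c ^ m)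
    have h7 := h6.deriv
    simp only [Complex.ofRealCLM_apply, Complex.ofReal_one, mul_one] at h7
    rw [h7]
    ring

lemma contDiff_cexp_mul (c : ℂ) (N : WithTop ℕ∞) : ContDiff ℝ N (fun s : ℝ => Complex.exp (c * s)) := by
  have : ContDiff ℝ N (fun s : ℝ => (s : ℂ)) := Complex.ofRealCLM.contDiff
  exact (contDiff_const.mul this).cexp

lemma ex_eq {n : ℕ} (k : Fin n → ℤ) :
    ex k = (fun s : ℝ => Complex.exp ((2 * Real.pi * Complex.I) * s)) ∘ (dot k) := rfl

lemma ex_contDiff {n : ℕ} (k : Fin n → ℤ) (N : WithTop ℕ∞) : ContDiff ℝ N (ex k) := by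
  rw [ex_eq]
  exact (contDiff_cexp_mul _ _).comp (dot k).contDiff

lemma ex_norm {n : ℕ} (k : Fin n → ℤ) (x : E n) : ‖ex k x‖ = 1 := by
  unfold ex
  rw [Complex.norm_exp]
  simp

lemma iter_ex {n : ℕ} (k : Fin n → ℤ) (m : ℕ) (x : E n) :
    ‖iteratedFDeriv ℝ m (ex k) x‖ ≤ (2 * Real.pi * n) ^ m * ‖k‖ ^ m := by
  rw [ex_eq, ContinuousLinearMap.iteratedFDeriv_comp_right (n := m) _ (contDiff_cexp_mul _ _) x le_rfl]
  refine (ContinuousMultilinearMap.norm_compContinuousLinearMap_le _ _).trans ?_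
  rw [norm_iteratedFDeriv_eq_norm_iteratedDeriv, iter_exp]
  have h1 : ‖Complex.exp (2 * Real.pi * Complex.I * (dot k x : ℝ))‖ = 1 := ex_norm k x
  simp only [norm_mul, norm_pow, h1, Finset.prod_const, Finset.card_univ, Fintype.card_fin,
    Complex.norm_real, Complex.norm_I, Complex.norm_ofNat, mul_one]
  rw [Real.norm_of_nonneg Real.pi_pos.le, ← mul_pow, ← mul_pow]
  have := dot_norm k
  have := Real.pi_pos
  rw [mul_assoc (2 * Real.pi)]
  gcongr

lemma main_series {n : ℕ} (p : E n) (c : (Fin n → ℤ) → ℂ) (h0 : c 0 = 0)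
    (hnz : ∀ k : Fin n → ℤ, k ≠ 0 → dot k p ≠ 0)
    (hc : ∀ N : ℕ, ∃ C, ∀ k : Fin n → ℤ, ‖k‖ ^ N * ‖c k‖ ≤ C)
    (ha : ∀ N : ℕ, ∃ C, ∀ k : Fin n → ℤ,
      ‖k‖ ^ N * ‖c k / (2 * Real.pi * Complex.I * (dot k p : ℝ))‖ ≤ C) :
    ∃ φ : E n → ℂ, ContDiff ℝ (⊤ : ℕ∞) φ ∧ Per φ ∧ ∀ x, fderiv ℝ φ x p = ∑' k, c k * ex k x := by
  let a : (Fin n → ℤ) → ℂ := fun k => c k / (2 * Real.pi * Complex.I * (dot k p : ℝ))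
  have a0 : a 0 = 0 := by simp [a, h0]
  have hsm := summ_of_decay a a0 ha
  have hsc := summ_of_decay c h0 hc
  have hcd : ContDiff ℝ (⊤ : ℕ∞) (fun x => ∑' k, a k * ex k x) := by
    refine contDiff_tsum (v := fun m k => (2 * Real.pi * n) ^ m * (‖k‖ ^ m * ‖a k‖))
      (fun k => contDiff_const.mul (ex_contDiff k _)) (fun m _ => (hsm m).mul_left _) ?_
    intro m k x _
    have : iteratedFDeriv ℝ m (fun x => a k * ex k x) x = a k • iteratedFDeriv ℝ m (ex k) x :=
      iteratedFDeriv_const_smul_apply (a := a k) ((ex_contDiff k m).contDiffAt)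
    rw [this, norm_smul]
    have := iter_ex k m x
    calc _ ≤ ‖a k‖ * ((2 * Real.pi * n) ^ m * ‖k‖ ^ m) := by gcongr
      _ = _ := by ring
  refine ⟨_, hcd, ?_, ?_⟩
  · intro x k
    refine tsum_congr fun l => ?_
    congr 1
    unfold ex
    rw [map_add, dot_apply l (WithLp.toLp 2 (fun i => (k i : ℝ)))]
    push_cast
    rw [mul_add, Complex.exp_add]
    have : Complex.exp (2 * Real.pi * Complex.I * ∑ i, ((k i : ℂ) * (l i : ℂ))) = 1 := by
      rw [Complex.exp_eq_one_iff]
      exact ⟨∑ i, k i * l i, by push_cast; ring⟩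
    rw [this, mul_one]
  · intro x
    have hdir : HasDerivAt (fun t : ℝ => ∑' k, a k * ex k (x + t • p))
        (∑' k, c k * ex k (x + (0:ℝ) • p)) 0 := by
      refine hasDerivAt_tsum (𝕜 := ℝ) (u := fun k => ‖c k‖) (g := fun k (t : ℝ) => a k * ex k (x + t • p))
        (g' := fun k (t : ℝ) => c k * ex k (x + t • p)) (y₀ := 0) (by simpa using hsc 0) ?_ ?_ ?_ 0
      · intro k t
        have h1 : HasDerivAt (fun t : ℝ => dot k (x + t • p)) (dot k p) t := by
          have h2 : HasDerivAt (fun t : ℝ => x + t • p) p t := by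
            simpa using ((hasDerivAt_id t).smul_const p).const_add x
          exact (dot k).hasFDerivAt.comp_hasDerivAt t h2
        have h3 := ((h1.ofReal_comp.const_mul (2 * Real.pi * Complex.I)).cexp).const_mul (a k)
        refine h3.congr_deriv ?_
        by_cases hk : k = 0
        · subst hk
          simp [a0, h0]
        · have h4 : ((dot k p : ℝ) : ℂ) ≠ 0 := by exact_mod_cast hnz k hk
          have h5 : (Real.pi : ℂ) ≠ 0 := by exact_mod_cast Real.pi_ne_zero
          have h6 := Complex.I_ne_zero
          simp only [a, ex]
          field_simp
      · intro k t
        simp [ex_norm]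
      · refine Summable.of_norm ?_
        simpa [ex_norm] using hsm 0
    have h2 : HasDerivAt (fun t : ℝ => x + t • p) p 0 := by
      simpa using ((hasDerivAt_id (0:ℝ)).smul_const p).const_add x
    have h3 : HasFDerivAt (fun x => ∑' k, a k * ex k x) (fderiv ℝ (fun x => ∑' k, a k * ex k x) x)
        (x + (0:ℝ) • p) := by
      simpa using ((hcd.differentiable (by simp)) x).hasFDerivAt
    have h5 : HasDerivAt (fun t : ℝ => ∑' k, a k * ex k (x + t • p))
        (fderiv ℝ (fun x => ∑' k, a k * ex k x) x p) 0 :=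
      HasFDerivAt.comp_hasDerivAt (l := fun x => ∑' k, a k * ex k x) (0:ℝ) h3 h2
    have h4 := h5.unique hdir
    simpa using h4

lemma small_div {n : ℕ} (p : E n)
    (hdio : ∃ c > (0:ℝ), ∃ γ > (0:ℝ), ∀ k : Fin n → ℤ, k ≠ 0 →
      |∑ i, p i * (k i : ℝ)| ≥ c / (Real.sqrt (∑ i, ((k i : ℝ)) ^ 2)) ^ γ) :
    ∃ B : ℝ, 0 < B ∧ ∃ M : ℕ, ∀ k : Fin n → ℤ, k ≠ 0 → 1 ≤ B * ‖k‖ ^ M * |dot k p| := by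
  obtain ⟨c, hc, γ, hγ, h⟩ := hdio
  refine ⟨((n:ℝ) + 1) ^ ⌈γ⌉₊ / c, by positivity, ⌈γ⌉₊, fun k hk => ?_⟩
  have h1 := h k hk
  rw [← dot_apply] at h1
  obtain ⟨j, hj⟩ := Function.ne_iff.1 hk
  have hk1 : (1:ℝ) ≤ ‖k‖ := by
    refine le_trans ?_ (norm_le_pi_norm k j)
    rw [Int.norm_eq_abs]
    exact_mod_cast Int.one_le_abs hj
  set S := Real.sqrt (∑ i, ((k i : ℝ)) ^ 2) with hS
  have hSpos : 0 < S := by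
    apply Real.sqrt_pos.2
    refine lt_of_lt_of_le ?_ (Finset.single_le_sum (f := fun i => ((k i : ℝ)) ^ 2)
      (fun _ _ => sq_nonneg _) (Finset.mem_univ j))
    have : (k j : ℝ) ≠ 0 := by exact_mod_cast hj
    positivity
  have hSle : S ≤ (n + 1) * ‖k‖ := by
    apply Real.sqrt_le_iff.2
    refine ⟨by positivity, ?_⟩
    have : ∀ i ∈ Finset.univ, ((k i : ℝ)) ^ 2 ≤ ‖k‖ ^ 2 := by
      intro i _
      have h5 : ‖(k i : ℝ)‖ = ‖k i‖ := rfl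
      rw [← sq_abs, ← Real.norm_eq_abs, h5]
      have := norm_le_pi_norm k i
      gcongr
    refine (Finset.sum_le_sum this).trans ?_
    simp only [Finset.sum_const, Finset.card_univ, Fintype.card_fin, nsmul_eq_mul]
    rw [mul_pow]
    have : (n:ℝ) ≤ (n+1)^2 := by nlinarith [(Nat.cast_nonneg n : (0:ℝ) ≤ n)]
    gcongr
  have hpow : S ^ γ ≤ ((n:ℝ) + 1) ^ ⌈γ⌉₊ * ‖k‖ ^ ⌈γ⌉₊ := by
    calc S ^ γ ≤ (((n:ℝ) + 1) * ‖k‖) ^ γ := by gcongr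
      _ ≤ (((n:ℝ) + 1) * ‖k‖) ^ ((⌈γ⌉₊ : ℕ) : ℝ) := by
        apply Real.rpow_le_rpow_of_exponent_le _ (Nat.le_ceil γ)
        nlinarith [(Nat.cast_nonneg n : (0:ℝ) ≤ n)]
      _ = _ := by rw [Real.rpow_natCast, mul_pow]
  have hSγ : 0 < S ^ γ := Real.rpow_pos_of_pos hSpos γ
  calc (1:ℝ) = (S ^ γ / c) * (c / S ^ γ) := by field_simp
    _ ≤ (((n:ℝ) + 1) ^ ⌈γ⌉₊ * ‖k‖ ^ ⌈γ⌉₊ / c) * |dot k p| := by gcongr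
    _ = _ := by ring

end DioAux

open DioAux in
theorem statement13 {n : ℕ} (hn : 1 ≤ n) (p : EuclideanSpace ℝ (Fin n))
    (hdio : ∃ c > (0:ℝ), ∃ γ > (0:ℝ), ∀ k : Fin n → ℤ, k ≠ 0 →
      |∑ i, p i * (k i : ℝ)| ≥ c / (Real.sqrt (∑ i, ((k i : ℝ)) ^ 2)) ^ γ)
    (f : EuclideanSpace ℝ (Fin n) → ℝ) (hf : ContDiff ℝ (⊤ : ℕ∞) f)
    (hper : ∀ (x : EuclideanSpace ℝ (Fin n)) (k : Fin n → ℤ),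
      f (x + (WithLp.equiv 2 (Fin n → ℝ)).symm fun i => (k i : ℝ)) = f x)
    (hmean :
      (∫ x in {x : EuclideanSpace ℝ (Fin n) | ∀ i, x i ∈ Set.Icc (0:ℝ) 1}, f x) = 0) :
    ∃ φ : EuclideanSpace ℝ (Fin n) → ℝ, ContDiff ℝ (⊤ : ℕ∞) φ ∧
      (∀ (x : EuclideanSpace ℝ (Fin n)) (k : Fin n → ℤ),
        φ (x + (WithLp.equiv 2 (Fin n → ℝ)).symm fun i => (k i : ℝ)) = φ x) ∧
      ∀ x, ⟪p, gradient φ x⟫ = f x := by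
  let g : E n → ℂ := fun x => (f x : ℂ)
  have hg : Per g := fun x k => congrArg Complex.ofReal (hper x k)
  have hs : ContDiff ℝ (⊤ : ℕ∞) g := Complex.ofRealCLM.contDiff.comp hf
  have hc0 : coef g 0 = 0 := by
    rw [coef_zero hg]
    simp only [g]
    rw [integral_complex_ofReal, hmean, Complex.ofReal_zero]
  have hdec : ∀ N : ℕ, ∃ C, ∀ k : Fin n → ℤ, ‖k‖ ^ N * ‖coef g k‖ ≤ C :=
    fun N => decay hn N hg hs
  obtain ⟨B, hB, M, hsd⟩ := small_div p hdio
  have hnz : ∀ k : Fin n → ℤ, k ≠ 0 → dot k p ≠ 0 := by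
    intro k hk h0
    have := hsd k hk
    rw [h0] at this
    simp at this
    linarith
  obtain ⟨ψ, hψ, hψp, hψd⟩ := main_series p (coef g) hc0 hnz hdec (by
    intro N
    obtain ⟨C, hC⟩ := hdec (N + M)
    refine ⟨B * C, fun k => ?_⟩
    by_cases hk : k = 0
    · subst hk
      have := hC 0
      rw [hc0] at this ⊢
      simp only [norm_zero, mul_zero, zero_div] at this ⊢
      positivity
    · have hd : 0 < |dot k p| := abs_pos.2 (hnz k hk)
      have h1 := hsd k hk
      simp only [norm_div, norm_mul, Complex.norm_real, Complex.norm_I, Complex.norm_ofNat, mul_one]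
      rw [Real.norm_of_nonneg Real.pi_pos.le, Real.norm_eq_abs, ← mul_div_assoc,
        div_le_iff₀ (by positivity)]
      have h2 := hC k
      rw [pow_add] at h2
      have hC0 : 0 ≤ C := le_trans (by positivity) h2
      have h6 : (1:ℝ) ≤ 2 * Real.pi := by linarith [Real.pi_gt_three]
      calc ‖k‖ ^ N * ‖coef g k‖ = ‖k‖ ^ N * ‖coef g k‖ * 1 := by ring
        _ ≤ ‖k‖ ^ N * ‖coef g k‖ * (B * ‖k‖ ^ M * |dot k p|) := by gcongr
        _ = B * (‖k‖ ^ N * ‖k‖ ^ M * ‖coef g k‖) * (1 * |dot k p|) := by ring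
        _ ≤ B * C * (2 * Real.pi * |dot k p|) := by gcongr)
  have hsum : ∀ x, ∑' k, coef g k * ex k x = (f x : ℂ) := by
    intro x
    let G : C(UnitAddTorus (Fin n), ℂ) := ⟨lift g, continuous_lift hg hs.continuous⟩
    have hS : Summable (UnitAddTorus.mFourierCoeff G) := by
      refine Summable.of_norm ?_
      have h9 := summ_of_decay (coef g) hc0 hdec 0
      simp only [pow_zero, one_mul] at h9
      exact h9
    have h1 := (UnitAddTorus.hasSum_mFourier_series_apply_of_summable hS (tmk x)).tsum_eq
    have h2 : G (tmk x) = (f x : ℂ) := lift_tmk hg x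
    rw [h2] at h1
    rw [← h1]
    congr 1
    funext k
    rw [mFourier_tmk]
    rfl
  refine ⟨fun x => (ψ x).re, Complex.reCLM.contDiff.comp hψ,
    fun x k => congrArg Complex.re (hψp x k), fun x => ?_⟩
  have hd : HasFDerivAt (fun x => (ψ x).re) (Complex.reCLM.comp (fderiv ℝ ψ x)) x :=
    Complex.reCLM.hasFDerivAt.comp x (hψ.differentiable (by simp) x).hasFDerivAt
  rw [real_inner_comm, gradient, InnerProductSpace.toDual_symm_apply, hd.fderiv]
  simp [hψd, hsum]
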